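/- There is a universal constant C such that for every square-integrable martingale difference sequence {Y_m}_{m=1}^n (n ≥ 2) with Σ_{i=1}^n σ_i²(Y) = s_n² almost surely, Z_3(X_n, N) ≤ C · s_n^{-3} Σ_{i=1}^n E[|Y_i|³], where N is a standard normal random variable. -/

import Mathlib

open MeasureTheory ProbabilityTheory Real Filter

noncomputable section

/-- `E[|U|^q]^{1/q}`. -/
def rnorm {Ω : Type*} [MeasurableSpace Ω] (μ : Measure Ω) (q : ℝ) (U : Ω → ℝ) : ℝ :=
  (∫ ω, |U ω| ^ q ∂μ) ^ (1 / q)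

/-- Wasserstein distance of order `r` between two laws on `ℝ`, defined as the infimum of
`E[|U'-V'|^r]^{1/r}` over all couplings. -/
def wassersteinDist (r : ℝ) (μ ν : Measure ℝ) : ℝ :=
  sInf { d : ℝ | ∃ cpl : Measure (ℝ × ℝ), IsProbabilityMeasure cpl ∧
    cpl.map Prod.fst = μ ∧ cpl.map Prod.snd = ν ∧
    d = (∫ p, |p.1 - p.2| ^ r ∂cpl) ^ (1 / r) }

/-- The standard normal law on `ℝ`. -/
def stdGaussian : Measure ℝ := gaussianReal 0 1

/-- `{Y_i}_{i=1}^n` is a square-integrable martingale difference sequence w.r.t. `F`. -/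
structure IsMDS {Ω : Type*} [m0 : MeasurableSpace Ω] (μ : Measure Ω)
    (F : ℕ → MeasurableSpace Ω) (n : ℕ) (Y : ℕ → Ω → ℝ) : Prop where
  protected le : ∀ i, F i ≤ m0
  protected mono : Monotone F
  protected adapted : ∀ i, 1 ≤ i → i ≤ n → Measurable[F i] (Y i)
  protected memL2 : ∀ i, 1 ≤ i → i ≤ n → MemLp (Y i) 2 μ
  protected mdiff : ∀ i, 1 ≤ i → i ≤ n → μ[Y i | F (i - 1)] =ᵐ[μ] 0

/-- An N-function. -/
def IsNFunction (φ : ℝ → ℝ) : Prop :=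
  ConvexOn ℝ (Set.Ici 0) φ ∧ (∀ x, 0 ≤ x → 0 ≤ φ x) ∧
  Tendsto (fun x => φ x / x) (nhdsWithin 0 (Set.Ioi 0)) (nhds 0) ∧
  Tendsto (fun x => φ x / x) atTop atTop ∧
  (∀ x, 0 < x → 0 < φ x)

/-- `φ₁ ≼ φ₂` : the ratio `φ₂/φ₁` is non-decreasing on `(0,∞)`. -/
def Dominates (φ₁ φ₂ : ℝ → ℝ) : Prop :=
  MonotoneOn (fun x => φ₂ x / φ₁ x) (Set.Ioi (0 : ℝ))

/-- Generalized inverse of `φ` on `[0,∞)`. -/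
def ninv (φ : ℝ → ℝ) (y : ℝ) : ℝ := sInf {x : ℝ | 0 ≤ x ∧ y ≤ φ x}

/-- Orlicz norm of the finite sequence `{Y_i}_{i=1}^n`. -/
def orliczSeqNorm {Ω : Type*} [MeasurableSpace Ω] (μ : Measure Ω) (φ : ℝ → ℝ)
    (n : ℕ) (Y : ℕ → Ω → ℝ) : ℝ :=
  sInf {c : ℝ | 0 < c ∧ (1 / n : ℝ) * ∑ i ∈ Finset.Icc 1 n, ∫ ω, φ (|Y i ω| / c) ∂μ ≤ 1}


open scoped ENNReal

/-- Zolotarev's ideal distance of integer order `r`: the supremum of `E f(U) - E f(V)` over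
`(r-1)`-times differentiable `f` whose `(r-1)`-st derivative is `1`-Lipschitz. -/
def zolotarev {Ω : Type*} [MeasurableSpace Ω] (r : ℕ) (μ : Measure Ω) (U : Ω → ℝ)
    (ν : Measure ℝ) : ℝ :=
  sSup { d : ℝ | ∃ f : ℝ → ℝ, ContDiff ℝ (r - 1 : ℕ) f ∧
    LipschitzWith 1 (iteratedDeriv (r - 1) f) ∧
    d = (∫ ω, f (U ω) ∂μ) - ∫ x, f x ∂ν }

/-- The Fenchel–Legendre transform of `φ` (with the supremum over `y ≥ 0`). -/
def fenchel (φ : ℝ → ℝ) (x : ℝ) : ℝ := sSup ((fun y => x * y - φ y) '' Set.Ici 0)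

/-- `C_φ = sup_{x,y>0} (φ⁻¹(x)φ_*⁻¹(x)/x) / (φ⁻¹(y)φ_*⁻¹(y)/y)`. -/
def nratioConst (φ : ℝ → ℝ) : ℝ :=
  sSup { r : ℝ | ∃ x > (0:ℝ), ∃ y > (0:ℝ),
    r = (ninv φ x * ninv (fenchel φ) x / x) / (ninv φ y * ninv (fenchel φ) y / y) }

/-- `λ_m = ( Σ_{i=m+1}^n σ_i²(Y) + β² s_n² )^{1/2}`. -/
def lamCV {Ω : Type*} [MeasurableSpace Ω] (μ : Measure Ω) (F : ℕ → MeasurableSpace Ω)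
    (n : ℕ) (Y : ℕ → Ω → ℝ) (sn β : ℝ) (m : ℕ) (ω : Ω) : ℝ :=
  Real.sqrt ((∑ j ∈ Finset.Icc (m + 1) n, (μ[fun ω' => Y j ω' ^ 2 | F (j - 1)]) ω)
    + β ^ 2 * sn ^ 2)

/-!
Lindeberg's replacement method with random variances. Replace the `Y_i` one at a time, from the
last to the first, by independent centred Gaussians of conditional variance `σ_i²`. The Gaussians
already inserted after step `i` carry the variance `∑_{j > i} σ_j²`, which equals
`s² - ∑_{j ≤ i} σ_j²` because the conditional variances add up to the constant `s²`; hence it is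
known at time `i - 1`. Conditionally on `F_{i-1}`, both `Y_i` and its Gaussian substitute are thus
perturbations of the same smoothed test function, at the same point, with the same first two
moments. The Taylor terms up to order two cancel, and as the second derivative of the test function
is `1`-Lipschitz, the error is at most `(E|Y_i|³ + E|N|³ E σ_i³) / 6`, where `E σ_i³ ≤ E|Y_i|³` by
Jensen's inequality. If `∑ Y_i` has no third moment, the real supremum defining the distance is over
an unbounded set and takes the value `0`.
-/

open scoped NNReal Nat
open Asymptotics

section TestFunctions

/-- The functions with a `k`-th derivative that is `L`-Lipschitz. For `L = 1` this is the class of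
test functions of Zolotarev's distance of order `k + 1`. -/
structure IsZolotarevTest (k : ℕ) (L : ℝ≥0) (f : ℝ → ℝ) : Prop where
  protected contDiff : ContDiff ℝ k f
  protected lipschitz : LipschitzWith L (iteratedDeriv k f)

variable {k : ℕ} {L : ℝ≥0} {f : ℝ → ℝ}

namespace IsZolotarevTest

lemma succ_iff :
    IsZolotarevTest (k + 1) L f ↔ Differentiable ℝ f ∧ IsZolotarevTest k L (deriv f) := by
  have contDiff_iff : ContDiff ℝ (k + 1 : ℕ) f ↔ Differentiable ℝ f ∧ ContDiff ℝ k (deriv f) := by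
    simp [contDiff_succ_iff_deriv]
  constructor
  · rintro ⟨hf, hL⟩
    rw [iteratedDeriv_succ'] at hL
    exact ⟨(contDiff_iff.1 hf).1, (contDiff_iff.1 hf).2, hL⟩
  · rintro ⟨hf, hf', hL⟩
    rw [← iteratedDeriv_succ'] at hL
    exact ⟨contDiff_iff.2 ⟨hf, hf'⟩, hL⟩

protected lemma deriv (hf : IsZolotarevTest (k + 1) L f) : IsZolotarevTest k L (deriv f) :=
  (succ_iff.1 hf).2

lemma hasDerivAt (hf : IsZolotarevTest (k + 1) L f) (x : ℝ) : HasDerivAt f (deriv f x) x :=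
  ((succ_iff.1 hf).1 x).hasDerivAt

lemma comp_const_mul (hf : IsZolotarevTest k L f) (c : ℝ) :
    IsZolotarevTest k (‖c‖₊ ^ (k + 1) * L) fun x ↦ f (c * x) := by
  refine ⟨hf.contDiff.comp (by fun_prop), LipschitzWith.of_dist_le_mul fun x y ↦ ?_⟩
  rw [iteratedDeriv_comp_const_mul hf.contDiff]
  calc dist (c ^ k * iteratedDeriv k f (c * x)) (c ^ k * iteratedDeriv k f (c * y))
      = |c| ^ k * dist (iteratedDeriv k f (c * x)) (iteratedDeriv k f (c * y)) := by
        rw [Real.dist_eq, ← mul_sub, abs_mul, abs_pow, Real.dist_eq]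
    _ ≤ |c| ^ k * (L * dist (c * x) (c * y)) := by
        gcongr
        exact hf.lipschitz.dist_le_mul _ _
    _ = (‖c‖₊ ^ (k + 1) * L : ℝ≥0) * dist x y := by
        rw [Real.dist_eq, ← mul_sub, abs_mul, Real.dist_eq]
        push_cast
        rw [Real.norm_eq_abs]
        ring

lemma pow_div_factorial_add_const (k : ℕ) (c : ℝ) :
    IsZolotarevTest k 1 fun x ↦ x ^ (k + 1) / (k + 1)! + c := by
  induction k generalizing c with
  | zero => exact ⟨by fun_prop, LipschitzWith.of_dist_le_mul fun x y ↦ by simp⟩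
  | succ k ih =>
    refine succ_iff.2 ⟨by fun_prop, ?_⟩
    convert! ih 0 using 2 with x
    rw [Nat.factorial_succ (k + 1)]
    simp only [deriv_add_const, deriv_div_const, deriv_pow_field, add_zero]
    push_cast
    field_simp

protected lemma iteratedDeriv {j : ℕ} (hf : IsZolotarevTest k L f) (hj : j ≤ k) :
    IsZolotarevTest (k - j) L (iteratedDeriv j f) := by
  induction j with
  | zero => simpa using hf
  | succ j ih =>
    rw [iteratedDeriv_succ]
    refine IsZolotarevTest.deriv ?_
    rw [show k - (j + 1) + 1 = k - j by omega]
    exact ih (by omega)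

end IsZolotarevTest

lemma exists_abs_le_of_isBigO_top (hf : f =O[⊤] fun x ↦ 1 + |x| ^ k) :
    ∃ A, 0 ≤ A ∧ ∀ x, |f x| ≤ A * (1 + |x| ^ k) := by
  obtain ⟨A, hA, hfA⟩ := hf.exists_nonneg
  refine ⟨A, hA, fun x ↦ ?_⟩
  simpa [abs_of_nonneg (show 0 ≤ 1 + |x| ^ k by positivity)] using isBigOWith_top.1 hfA x

lemma isBigO_top_one_add_abs_pow_succ {g : ℝ → ℝ} (hf : ∀ x, HasDerivAt f (g x) x)
    (hg : g =O[⊤] fun x ↦ 1 + |x| ^ k) : f =O[⊤] fun x ↦ 1 + |x| ^ (k + 1) := by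
  obtain ⟨A, hA, hgA⟩ := exists_abs_le_of_isBigO_top hg
  have mean_value (x : ℝ) : |f x - f 0| ≤ A * (1 + |x| ^ k) * |x| := by
    have deriv_bound (z : ℝ) (hz : z ∈ Set.Icc (-|x|) |x|) : ‖g z‖ ≤ A * (1 + |x| ^ k) :=
      (hgA z).trans (by gcongr A * (1 + ?_ ^ k); exact abs_le.2 hz)
    simpa using (convex_Icc (-|x|) |x|).norm_image_sub_le_of_norm_hasDerivWithin_le
      (fun z _ ↦ (hf z).hasDerivWithinAt) deriv_bound
      (show (0 : ℝ) ∈ _ by simp) ⟨neg_abs_le x, le_abs_self x⟩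
  refine isBigO_top.2 ⟨|f 0| + 2 * A, fun x ↦ ?_⟩
  have abs_le_pow : |x| ≤ 1 + |x| ^ (k + 1) := by
    rcases le_total |x| 1 with hx | hx
    · linarith [pow_nonneg (abs_nonneg x) (k + 1)]
    · linarith [show |x| ≤ |x| ^ (k + 1) from le_self_pow₀ hx k.succ_ne_zero]
  rw [Real.norm_eq_abs, Real.norm_of_nonneg (by positivity)]
  calc |f x| ≤ |f 0| + |f x - f 0| := by
        simpa using abs_add_le (f 0) (f x - f 0)
    _ ≤ |f 0| + A * (|x| + |x| ^ (k + 1)) := by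
        linarith [mean_value x, show A * (1 + |x| ^ k) * |x| = A * (|x| + |x| ^ (k + 1)) by ring]
    _ ≤ |f 0| * (1 + |x| ^ (k + 1)) + A * (2 * (1 + |x| ^ (k + 1))) := by
        gcongr
        · refine le_mul_of_one_le_right (abs_nonneg _) ?_
          linarith [pow_nonneg (abs_nonneg x) (k + 1)]
        · linarith
    _ = (|f 0| + 2 * A) * (1 + |x| ^ (k + 1)) := by ring

lemma IsZolotarevTest.isBigO_top (hf : IsZolotarevTest k L f) :
    f =O[⊤] fun x ↦ 1 + |x| ^ (k + 1) := by
  induction k generalizing f with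
  | zero =>
    refine Asymptotics.isBigO_top.2 ⟨|f 0| + L, fun x ↦ ?_⟩
    have lipschitz_zero : |f x - f 0| ≤ L * |x| := by
      simpa [Real.dist_eq] using hf.lipschitz.dist_le_mul x 0
    rw [Real.norm_eq_abs, Real.norm_of_nonneg (by positivity)]
    have := abs_add_le (f 0) (f x - f 0)
    rw [add_sub_cancel] at this
    rw [zero_add, pow_one]
    nlinarith [abs_nonneg x, abs_nonneg (f 0), L.coe_nonneg]
  | succ k ih => exact isBigO_top_one_add_abs_pow_succ hf.hasDerivAt (ih hf.deriv)

lemma abs_le_mul_pow_succ_div_of_abs_deriv_le {G G' : ℝ → ℝ} {C : ℝ} (hG0 : G 0 = 0)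
    (hG : ∀ y, HasDerivAt G (G' y) y) (hG' : ∀ y, |G' y| ≤ C * |y| ^ k) (y : ℝ) :
    |G y| ≤ C * |y| ^ (k + 1) / (k + 1) := by
  have deriv_ray (t : ℝ) : HasDerivAt (fun t ↦ G (t * y)) (G' (t * y) * y) t := by
    simpa [Function.comp_def] using (hG (t * y)).comp t ((hasDerivAt_id t).mul_const y)
  have deriv_bound (t : ℝ) : HasDerivAt (fun t ↦ C * |y| ^ (k + 1) / (k + 1) * t ^ (k + 1))
      (C * |y| ^ (k + 1) * t ^ k) t := by
    convert! (hasDerivAt_pow (k + 1) t).const_mul (C * |y| ^ (k + 1) / (k + 1)) using 1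
    push_cast
    field_simp
  have := image_norm_le_of_norm_deriv_right_le_deriv_boundary (a := 0) (b := 1)
    (fun t _ ↦ (deriv_ray t).continuousAt.continuousWithinAt)
    (fun t _ ↦ (deriv_ray t).hasDerivWithinAt) (by simp [hG0]) deriv_bound
    (fun t ht ↦ by
      rw [Real.norm_eq_abs, abs_mul]
      calc |G' (t * y)| * |y| ≤ C * |t * y| ^ k * |y| := by gcongr; exact hG' _
        _ = C * |y| ^ (k + 1) * t ^ k := by rw [abs_mul, abs_of_nonneg ht.1]; ring)
    (Set.right_mem_Icc.2 zero_le_one)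
  simpa using this

lemma IsZolotarevTest.abs_sub_taylor_le (hf : IsZolotarevTest k L f) (x y : ℝ) :
    |f (x + y) - ∑ j ∈ Finset.range (k + 1), iteratedDeriv j f x * y ^ j / j !|
      ≤ L * |y| ^ (k + 1) / (k + 1)! := by
  induction k generalizing f y with
  | zero => simpa [Real.dist_eq] using hf.lipschitz.dist_le_mul (x + y) x
  | succ k ih =>
    have remainder_deriv (y : ℝ) : HasDerivAt
        (fun y ↦ f (x + y) - ∑ j ∈ Finset.range (k + 2), iteratedDeriv j f x * y ^ j / j !)
        (deriv f (x + y)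
          - ∑ j ∈ Finset.range (k + 1), iteratedDeriv j (deriv f) x * y ^ j / j !) y := by
      simp only [Finset.sum_range_succ' _ (k + 1), pow_zero]
      refine ((hf.hasDerivAt _).comp_const_add x y).sub
        ((HasDerivAt.fun_sum fun j _ ↦ ?_).add_const _)
      convert! ((hasDerivAt_pow (j + 1) y).const_mul (iteratedDeriv (j + 1) f x)).div_const
        ((j + 1)! : ℝ) using 1
      rw [iteratedDeriv_succ', Nat.factorial_succ]
      push_cast
      field_simp
    have remainder_zero :
        f (x + 0) - ∑ j ∈ Finset.range (k + 2), iteratedDeriv j f x * 0 ^ j / j ! = 0 := by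
      simp [Finset.sum_range_succ' _ (k + 1)]
    convert! abs_le_mul_pow_succ_div_of_abs_deriv_le (k := k + 1) (C := L / (k + 1)!) remainder_zero
      remainder_deriv (fun y ↦ (ih hf.deriv y).trans_eq (by ring)) y using 1
    rw [Nat.factorial_succ (k + 1)]
    push_cast
    field_simp

end TestFunctions

section GaussianSmoothing

/-- The heat semigroup at time `t`: `f` is averaged against a centred Gaussian of variance `t`.
For `t < 0` this is `f` itself, since then `√t = 0`. -/
def gaussianSmoothing (f : ℝ → ℝ) (t x : ℝ) : ℝ :=
  ∫ z, f (x + √t * z) ∂gaussianReal 0 1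

/-- The third absolute moment of the standard normal law. -/
def gaussianThirdAbsMoment : ℝ := ∫ z, |z| ^ 3 ∂gaussianReal 0 1

lemma gaussianThirdAbsMoment_nonneg : 0 ≤ gaussianThirdAbsMoment :=
  integral_nonneg fun z ↦ by positivity

lemma integrable_abs_pow_gaussianReal (m : ℝ) (v : ℝ≥0) (k : ℕ) :
    Integrable (fun z ↦ |z| ^ k) (gaussianReal m v) := by
  simpa using (memLp_id_gaussianReal' (μ := m) (v := v) k (by simp)).integrable_norm_pow'

lemma integral_sq_gaussianReal (v : ℝ≥0) : ∫ z, z ^ 2 ∂gaussianReal 0 v = v := by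
  have variance_eq := variance_id_gaussianReal (μ := 0) (v := v)
  rw [variance_of_integral_eq_zero (by fun_prop) (by simp)] at variance_eq
  simpa using variance_eq

lemma integrable_quadratic_gaussianReal (m : ℝ) (v : ℝ≥0) (a b c : ℝ) :
    Integrable (fun z ↦ a + b * z + c * z ^ 2) (gaussianReal m v) := by
  have integrable_id : Integrable id (gaussianReal m v) :=
    (memLp_id_gaussianReal' 1 (by simp)).integrable le_rfl
  have integrable_sq : Integrable (fun z ↦ z ^ 2) (gaussianReal m v) := by
    simpa using integrable_abs_pow_gaussianReal m v 2
  exact ((integrable_const a).add (integrable_id.const_mul b)).add (integrable_sq.const_mul c)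

lemma integral_quadratic_gaussianReal (v : ℝ≥0) (a b c : ℝ) :
    ∫ z, (a + b * z + c * z ^ 2) ∂gaussianReal 0 v = a + c * v := by
  have integrable_linear : Integrable (fun z ↦ a + b * z) (gaussianReal 0 v) := by
    simpa using integrable_quadratic_gaussianReal 0 v a b 0
  have integrable_sq : Integrable (fun z ↦ c * z ^ 2) (gaussianReal 0 v) := by
    simpa using integrable_quadratic_gaussianReal 0 v 0 0 c
  have integrable_id : Integrable (fun z ↦ b * z) (gaussianReal 0 v) := by
    simpa using integrable_quadratic_gaussianReal 0 v 0 b 0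
  rw [integral_add integrable_linear integrable_sq,
    integral_add (integrable_const a) integrable_id, integral_const_mul, integral_const_mul,
    integral_sq_gaussianReal, integral_id_gaussianReal]
  simp

lemma gaussianReal_map_sqrt_mul (t : ℝ≥0) :
    (gaussianReal 0 1).map (√t * ·) = gaussianReal 0 t := by
  rw [gaussianReal_map_const_mul]
  congr 1
  · simp
  · ext; simp

variable {k : ℕ} {L : ℝ≥0} {f : ℝ → ℝ}

lemma gaussianSmoothing_zero (f : ℝ → ℝ) (x : ℝ) : gaussianSmoothing f 0 x = f x := by
  simp [gaussianSmoothing]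

lemma measurable_gaussianSmoothing (hf : Continuous f) :
    Measurable fun p : ℝ × ℝ ↦ gaussianSmoothing f p.1 p.2 := by
  have : StronglyMeasurable fun q : (ℝ × ℝ) × ℝ ↦ f (q.1.2 + √q.1.1 * q.2) :=
    (hf.comp (by fun_prop)).stronglyMeasurable
  exact (this.integral_prod_right' (ν := gaussianReal 0 1)).measurable

lemma one_add_abs_add_mul_pow_le (k : ℕ) (x r z : ℝ) :
    1 + |x + r * z| ^ k ≤ 2 ^ k * (1 + |x| ^ k + |r| ^ k) * (1 + |z| ^ k) := by
  have two_pow : (1 : ℝ) ≤ 2 ^ k := one_le_pow₀ one_le_two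
  have expand : |x + r * z| ^ k ≤ 2 ^ k * (|x| ^ k + |r| ^ k * |z| ^ k) := calc
    |x + r * z| ^ k ≤ (|x| + |r| * |z|) ^ k := by
      gcongr
      exact (abs_add_le _ _).trans_eq (by rw [abs_mul])
    _ ≤ 2 ^ (k - 1) * (|x| ^ k + (|r| * |z|) ^ k) :=
      add_pow_le (abs_nonneg _) (by positivity) k
    _ ≤ 2 ^ k * (|x| ^ k + |r| ^ k * |z| ^ k) := by
      rw [mul_pow]
      gcongr
      · exact one_le_two
      · exact k.sub_le 1
  have : 0 ≤ 2 ^ k * (|r| ^ k + |z| ^ k + |x| ^ k * |z| ^ k) := by positivity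
  linarith

lemma integrable_comp_add_mul_gaussianReal (hf : Continuous f)
    (hfk : f =O[⊤] fun x ↦ 1 + |x| ^ k) (m : ℝ) (v : ℝ≥0) (x r : ℝ) :
    Integrable (fun z ↦ f (x + r * z)) (gaussianReal m v) := by
  obtain ⟨A, hA, hfA⟩ := exists_abs_le_of_isBigO_top hfk
  refine (((integrable_const 1).add (integrable_abs_pow_gaussianReal m v k)).const_mul
    (A * (2 ^ k * (1 + |x| ^ k + |r| ^ k)))).mono'
    (hf.comp (by fun_prop)).aestronglyMeasurable (ae_of_all _ fun z ↦ (hfA _).trans ?_)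
  rw [mul_assoc A]
  gcongr
  exact one_add_abs_add_mul_pow_le k x r z

lemma exists_abs_gaussianSmoothing_le (hfk : f =O[⊤] fun x ↦ 1 + |x| ^ k) :
    ∃ B, ∀ t x, |gaussianSmoothing f t x| ≤ B * (1 + |x| ^ k + √t ^ k) := by
  obtain ⟨A, hA, hfA⟩ := exists_abs_le_of_isBigO_top hfk
  refine ⟨A * 2 ^ k * ∫ z, (1 + |z| ^ k) ∂gaussianReal 0 1, fun t x ↦ ?_⟩
  have pointwise (z : ℝ) :
      ‖f (x + √t * z)‖ ≤ A * 2 ^ k * (1 + |x| ^ k + √t ^ k) * (1 + |z| ^ k) := by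
    refine (hfA _).trans ?_
    rw [mul_assoc A, mul_assoc A]
    gcongr
    simpa only [abs_of_nonneg (Real.sqrt_nonneg t)] using one_add_abs_add_mul_pow_le k x √t z
  refine (norm_integral_le_of_norm_le (((integrable_const 1).add
    (integrable_abs_pow_gaussianReal 0 1 k)).const_mul _) (ae_of_all _ pointwise)).trans_eq ?_
  rw [integral_const_mul]
  exact mul_right_comm _ _ _

lemma gaussianSmoothing_eq_integral_gaussianReal (hf : Continuous f) (t : ℝ≥0) (x : ℝ) :
    gaussianSmoothing f t x = ∫ z, f (x + z) ∂gaussianReal 0 t := by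
  rw [← gaussianReal_map_sqrt_mul]
  have continuous_add : Continuous fun z ↦ f (x + z) := by fun_prop
  exact (integral_map (by fun_prop) continuous_add.aestronglyMeasurable).symm

lemma gaussianSmoothing_add (hf : Continuous f) (hfk : f =O[⊤] fun x ↦ 1 + |x| ^ k) {a b : ℝ}
    (ha : 0 ≤ a) (hb : 0 ≤ b) (x : ℝ) :
    gaussianSmoothing f (a + b) x = gaussianSmoothing (gaussianSmoothing f a) b x := by
  lift a to ℝ≥0 using ha
  lift b to ℝ≥0 using hb
  have conv_eq : gaussianReal 0 (a + b) = gaussianReal 0 b ∗ gaussianReal 0 a := by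
    rw [gaussianReal_conv_gaussianReal, add_zero, add_comm]
  have integrable_conv : Integrable (fun z ↦ f (x + z)) (gaussianReal 0 b ∗ gaussianReal 0 a) := by
    simpa [conv_eq] using integrable_comp_add_mul_gaussianReal hf hfk 0 (a + b) x 1
  have measurable_inner : Measurable fun y ↦ gaussianSmoothing f a (x + y) :=
    (measurable_gaussianSmoothing hf).comp (by fun_prop : Measurable fun y ↦ ((a : ℝ), x + y))
  calc gaussianSmoothing f (a + b : ℝ≥0) x
      = ∫ y, ∫ z, f (x + (y + z)) ∂gaussianReal 0 a ∂gaussianReal 0 b := by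
        rw [gaussianSmoothing_eq_integral_gaussianReal hf, conv_eq, integral_conv integrable_conv]
    _ = ∫ y, gaussianSmoothing f a (x + y) ∂(gaussianReal 0 1).map (√b * ·) := by
        simp only [gaussianReal_map_sqrt_mul, gaussianSmoothing_eq_integral_gaussianReal hf,
          add_assoc]
    _ = gaussianSmoothing (gaussianSmoothing f a) b x :=
        integral_map (by fun_prop) measurable_inner.aestronglyMeasurable

lemma IsZolotarevTest.abs_gaussianSmoothing_sub_taylor_le (hf : IsZolotarevTest k L f)
    (t x y : ℝ) :
    |gaussianSmoothing f t (x + y)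
        - ∑ j ∈ Finset.range (k + 1), gaussianSmoothing (iteratedDeriv j f) t x * y ^ j / j !|
      ≤ L * |y| ^ (k + 1) / (k + 1)! := by
  have integrable_deriv (x : ℝ) {j : ℕ} (hj : j ≤ k) :
      Integrable (fun z ↦ iteratedDeriv j f (x + √t * z)) (gaussianReal 0 1) :=
    integrable_comp_add_mul_gaussianReal (hf.iteratedDeriv hj).contDiff.continuous
      (hf.iteratedDeriv hj).isBigO_top 0 1 x √t
  have integrable_term (j : ℕ) (hj : j ∈ Finset.range (k + 1)) :
      Integrable (fun z ↦ iteratedDeriv j f (x + √t * z) * y ^ j / j !) (gaussianReal 0 1) :=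
    ((integrable_deriv x (Finset.mem_range_succ_iff.1 hj)).mul_const _).div_const _
  have remainder_eq : gaussianSmoothing f t (x + y)
        - ∑ j ∈ Finset.range (k + 1), gaussianSmoothing (iteratedDeriv j f) t x * y ^ j / j !
      = ∫ z, (f (x + y + √t * z) - ∑ j ∈ Finset.range (k + 1),
          iteratedDeriv j f (x + √t * z) * y ^ j / j !) ∂gaussianReal 0 1 := by
    rw [integral_sub (by simpa using integrable_deriv (x + y) k.zero_le)
      (integrable_finsetSum _ integrable_term), integral_finsetSum _ integrable_term]
    simp only [integral_div, integral_mul_const, gaussianSmoothing]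
  rw [remainder_eq]
  have remainder_le (z : ℝ) : ‖f (x + y + √t * z) - ∑ j ∈ Finset.range (k + 1),
      iteratedDeriv j f (x + √t * z) * y ^ j / (j !)‖ ≤ L * |y| ^ (k + 1) / (k + 1)! := by
    rw [add_right_comm]
    exact hf.abs_sub_taylor_le (x + √t * z) y
  simpa using norm_integral_le_of_norm_le_const (μ := gaussianReal 0 1) (ae_of_all _ remainder_le)

lemma abs_gaussianSmoothing_sub_le_of_taylor {g : ℝ → ℝ} {x a₀ a₁ a₂ C : ℝ} (hg : Measurable g)
    (h : ∀ y, |g (x + y) - (a₀ + a₁ * y + a₂ * y ^ 2 / 2)| ≤ C * |y| ^ 3) {b : ℝ} (hb : 0 ≤ b) :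
    |gaussianSmoothing g b x - (a₀ + a₂ * b / 2)| ≤ C * gaussianThirdAbsMoment * √b ^ 3 := by
  set p : ℝ → ℝ := fun z ↦ a₀ + a₁ * √b * z + a₂ * b / 2 * z ^ 2
  have integrable_p : Integrable p (gaussianReal 0 1) := integrable_quadratic_gaussianReal ..
  have integral_p : ∫ z, p z ∂gaussianReal 0 1 = a₀ + a₂ * b / 2 :=
    (integral_quadratic_gaussianReal 1 ..).trans (by simp)
  have remainder_le (z : ℝ) : ‖g (x + √b * z) - p z‖ ≤ C * √b ^ 3 * |z| ^ 3 := by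
    convert h (√b * z) using 1
    · rw [mul_pow, Real.sq_sqrt hb, Real.norm_eq_abs]
      congr 1
      simp only [p]
      ring
    · rw [abs_mul, abs_of_nonneg (Real.sqrt_nonneg b)]
      ring
  have integrable_bound := (integrable_abs_pow_gaussianReal 0 1 3).const_mul (C * √b ^ 3)
  have integrable_remainder : Integrable (fun z ↦ g (x + √b * z) - p z) (gaussianReal 0 1) :=
    integrable_bound.mono' ((hg.comp (by fun_prop)).sub (by fun_prop)).aestronglyMeasurable
      (ae_of_all _ remainder_le)
  have integrable_comp : Integrable (fun z ↦ g (x + √b * z)) (gaussianReal 0 1) :=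
    (integrable_remainder.add integrable_p).congr (ae_of_all _ fun z ↦ sub_add_cancel _ _)
  calc |gaussianSmoothing g b x - (a₀ + a₂ * b / 2)|
      = |∫ z, (g (x + √b * z) - p z) ∂gaussianReal 0 1| := by
        rw [integral_sub integrable_comp integrable_p, integral_p, gaussianSmoothing]
    _ ≤ ∫ z, C * √b ^ 3 * |z| ^ 3 ∂gaussianReal 0 1 :=
        norm_integral_le_of_norm_le integrable_bound (ae_of_all _ remainder_le)
    _ = C * gaussianThirdAbsMoment * √b ^ 3 := by
        rw [integral_const_mul, gaussianThirdAbsMoment]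
        ring

lemma IsZolotarevTest.abs_gaussianSmoothing_sub_taylor_two_le (hf : IsZolotarevTest 2 L f)
    (t x y : ℝ) :
    |gaussianSmoothing f t (x + y)
        - (gaussianSmoothing f t x + gaussianSmoothing (deriv f) t x * y
          + gaussianSmoothing (deriv (deriv f)) t x * y ^ 2 / 2)|
      ≤ L / 6 * |y| ^ 3 := by
  have := hf.abs_gaussianSmoothing_sub_taylor_le t x y
  simp only [Finset.sum_range_succ, Finset.sum_range_zero, iteratedDeriv_succ, iteratedDeriv_zero,
    Nat.factorial] at this
  convert! this using 1
  · norm_num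
  · norm_num
    ring

lemma IsZolotarevTest.abs_gaussianSmoothing_sub_gaussianSmoothing_le
    (hf : IsZolotarevTest 2 L f) {t b : ℝ} (ht : 0 ≤ t) (hb : 0 ≤ b) (x y : ℝ) :
    |gaussianSmoothing f t (x + y) - gaussianSmoothing f (t + b) x
        - (gaussianSmoothing (deriv f) t x * y
          + gaussianSmoothing (deriv (deriv f)) t x / 2 * (y ^ 2 - b))|
      ≤ L / 6 * (|y| ^ 3 + gaussianThirdAbsMoment * √b ^ 3) := by
  have space_expansion := hf.abs_gaussianSmoothing_sub_taylor_two_le t x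
  have time_expansion := abs_gaussianSmoothing_sub_le_of_taylor
    ((measurable_gaussianSmoothing hf.contDiff.continuous).of_uncurry_left (x := t))
    space_expansion hb
  rw [← gaussianSmoothing_add hf.contDiff.continuous hf.isBigO_top ht hb] at time_expansion
  calc _ = |(gaussianSmoothing f t (x + y) - _) - (gaussianSmoothing f (t + b) x - _)| := by
        congr 1
        ring
    _ ≤ L / 6 * |y| ^ 3 + L / 6 * gaussianThirdAbsMoment * √b ^ 3 :=
        (abs_sub _ _).trans (add_le_add (space_expansion y) time_expansion)
    _ = L / 6 * (|y| ^ 3 + gaussianThirdAbsMoment * √b ^ 3) := by ring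

end GaussianSmoothing

section Moments

variable {Ω : Type*} {m m0 : MeasurableSpace Ω} {μ : Measure Ω} {p : ℝ≥0∞}

lemma memLp_abs_pow_div {X : Ω → ℝ} (hX : MemLp X p μ) (k : ℕ) :
    MemLp (fun ω ↦ |X ω| ^ k) (p / k) μ := by
  simpa using hX.norm_rpow_div k

lemma memLp_sq_div_two {X : Ω → ℝ} (hX : MemLp X p μ) : MemLp (fun ω ↦ X ω ^ 2) (p / 2) μ := by
  simpa using memLp_abs_pow_div hX 2

lemma memLp_condExp_sq {X : Ω → ℝ} (hX : MemLp X p μ) (hp : 2 ≤ p) :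
    MemLp (μ[fun ω ↦ X ω ^ 2 | m]) (p / 2) μ :=
  (memLp_sq_div_two hX).condExp
    ((ENNReal.le_div_iff_mul_le (by simp) (by simp)).2 (by rwa [one_mul]))

lemma memLp_sqrt {X : Ω → ℝ} (hX : MemLp X (p / 2) μ) : MemLp (fun ω ↦ √(X ω)) p μ := by
  have norm_sqrt : MemLp (fun ω ↦ ‖X ω‖ ^ (1 / 2 : ℝ)) p μ := by
    convert! hX.norm_rpow_div (1 / 2) using 1
    · simp
    · rw [div_eq_mul_inv, div_eq_mul_inv, one_div, inv_inv, mul_assoc,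
        ENNReal.inv_mul_cancel two_ne_zero ENNReal.ofNat_ne_top, mul_one]
  refine norm_sqrt.mono (Real.continuous_sqrt.comp_aestronglyMeasurable hX.1)
    (ae_of_all _ fun ω ↦ ?_)
  rw [← Real.sqrt_eq_rpow, Real.norm_of_nonneg (Real.sqrt_nonneg _),
    Real.norm_of_nonneg (Real.sqrt_nonneg _)]
  exact Real.sqrt_le_sqrt (Real.le_norm_self _)

lemma memLp_gaussianSmoothing [IsFiniteMeasure μ] {f : ℝ → ℝ} {k : ℕ} {S T : Ω → ℝ}
    (hf : Continuous f) (hfk : f =O[⊤] fun x ↦ 1 + |x| ^ k) (hS : MemLp S p μ)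
    (hT : MemLp T (p / 2) μ) :
    MemLp (fun ω ↦ gaussianSmoothing f (T ω) (S ω)) (p / k) μ := by
  obtain ⟨B, hB⟩ := exists_abs_gaussianSmoothing_le hfk
  have bound : MemLp (fun ω ↦ 1 + |S ω| ^ k + √(T ω) ^ k) (p / k) μ := by
    have memLp_sqrt_pow : MemLp (fun ω ↦ √(T ω) ^ k) (p / k) μ := by
      simpa only [abs_of_nonneg (Real.sqrt_nonneg _)] using memLp_abs_pow_div (memLp_sqrt hT) k
    have memLp_one : MemLp (fun _ : Ω ↦ (1 : ℝ)) (p / k) μ := memLp_const 1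
    exact (memLp_one.add (memLp_abs_pow_div hS k)).add memLp_sqrt_pow
  refine bound.of_le_mul (c := B) ((measurable_gaussianSmoothing hf).comp_aemeasurable
    (hT.1.aemeasurable.prodMk hS.1.aemeasurable)).aestronglyMeasurable (ae_of_all _ fun ω ↦ ?_)
  rw [Real.norm_of_nonneg (by positivity : 0 ≤ 1 + |S ω| ^ k + √(T ω) ^ k)]
  exact hB _ _

lemma integral_mul_eq_zero_of_condExp_eq_zero [IsFiniteMeasure μ] (hm : m ≤ m0) {X W : Ω → ℝ}
    (hX : StronglyMeasurable[m] X) (hXW : Integrable (X * W) μ) (hW : Integrable W μ)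
    (hW0 : μ[W | m] =ᵐ[μ] 0) : ∫ ω, X ω * W ω ∂μ = 0 := by
  rw [← integral_condExp hm]
  refine integral_eq_zero_of_ae ?_
  filter_upwards [condExp_mul_of_stronglyMeasurable_left hX hXW hW, hW0] with ω pull_out hω
  exact pull_out.trans (by simp [hω])

lemma condExp_sub_condExp_eq_zero [IsFiniteMeasure μ] {W : Ω → ℝ} (hW : Integrable W μ) :
    μ[W - μ[W | m] | m] =ᵐ[μ] 0 := by
  by_cases hm : m ≤ m0
  · filter_upwards [condExp_sub hW (integrable_condExp (m := m) (f := W)) m] with ω hω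
    rw [hω, condExp_of_stronglyMeasurable hm stronglyMeasurable_condExp integrable_condExp]
    simp
  · rw [condExp_of_not_le hm]

lemma integral_sqrt_condExp_sq_pow_le [IsFiniteMeasure μ] (hm : m ≤ m0) {W : Ω → ℝ} {k : ℕ}
    (hk : 2 ≤ k) (hW : MemLp W k μ) :
    ∫ ω, √((μ[fun ω' ↦ W ω' ^ 2 | m]) ω) ^ k ∂μ ≤ ∫ ω, |W ω| ^ k ∂μ := by
  have sq_rpow (x : ℝ) : ‖x ^ 2‖ ^ (k / 2 : ℝ) = |x| ^ k := by
    rw [Real.rpow_div_two_eq_sqrt _ (norm_nonneg _), Real.norm_of_nonneg (sq_nonneg x),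
      Real.sqrt_sq_eq_abs, Real.rpow_natCast]
  have integrable_pow : Integrable (fun ω ↦ |W ω| ^ k) μ := hW.integrable_norm_pow'
  have jensen := Integrable.norm_condExp_rpow_le (μ := μ) (m := m) (f := fun ω ↦ W ω ^ 2)
    (p := k / 2) (by rw [one_le_div two_pos]; exact_mod_cast hk) (by simpa only [sq_rpow])
  simp only [sq_rpow] at jensen
  rw [← integral_condExp hm (f := fun ω ↦ |W ω| ^ k)]
  refine integral_mono_of_nonneg (ae_of_all _ fun ω ↦ by positivity) integrable_condExp ?_
  filter_upwards [jensen] with ω hω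
  rw [Real.rpow_div_two_eq_sqrt _ (norm_nonneg _), Real.rpow_natCast] at hω
  refine le_trans ?_ hω
  gcongr
  exact Real.le_norm_self _

lemma integral_abs_pow_add_sqrt_condExp_sq_pow_le [IsFiniteMeasure μ] (hm : m ≤ m0) {W : Ω → ℝ}
    {k : ℕ} (hk : 2 ≤ k) (hW : MemLp W k μ) {c d : ℝ} (hc : 0 ≤ c) (hd : 0 ≤ d) :
    Integrable (fun ω ↦ c * (|W ω| ^ k + d * √((μ[fun ω' ↦ W ω' ^ 2 | m]) ω) ^ k)) μ ∧
      ∫ ω, c * (|W ω| ^ k + d * √((μ[fun ω' ↦ W ω' ^ 2 | m]) ω) ^ k) ∂μ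
        ≤ c * (1 + d) * ∫ ω, |W ω| ^ k ∂μ := by
  set v : Ω → ℝ := μ[fun ω' ↦ W ω' ^ 2 | m]
  have integrable_abs : Integrable (fun ω ↦ |W ω| ^ k) μ := hW.integrable_norm_pow'
  have integrable_sqrt : Integrable (fun ω ↦ √(v ω) ^ k) μ := by
    simpa [abs_of_nonneg]
      using (memLp_sqrt (memLp_condExp_sq hW (by exact_mod_cast hk))).integrable_norm_pow'
  refine ⟨(integrable_abs.add (integrable_sqrt.const_mul d)).const_mul c, ?_⟩
  calc ∫ ω, c * (|W ω| ^ k + d * √(v ω) ^ k) ∂μ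
      = c * (∫ ω, |W ω| ^ k ∂μ + d * ∫ ω, √(v ω) ^ k ∂μ) := by
        rw [integral_const_mul, integral_add integrable_abs (integrable_sqrt.const_mul d),
          integral_const_mul]
    _ ≤ c * (∫ ω, |W ω| ^ k ∂μ + d * ∫ ω, |W ω| ^ k ∂μ) := by
        gcongr c * (_ + d * ?_)
        exact integral_sqrt_condExp_sq_pow_le hm hk hW
    _ = c * (1 + d) * ∫ ω, |W ω| ^ k ∂μ := by ring

end Moments

section LindebergStep

variable {Ω : Type*} {m m0 : MeasurableSpace Ω} {μ : Measure Ω} [IsFiniteMeasure μ]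
  {L : ℝ≥0} {f : ℝ → ℝ} {S T W : Ω → ℝ}

lemma integral_gaussianSmoothing_mul_eq_zero {p q : ℝ≥0∞} {k : ℕ}
    [hpq : ENNReal.HolderConjugate (p / k) q] (hm : m ≤ m0)
    (hf : Continuous f) (hfk : f =O[⊤] fun x ↦ 1 + |x| ^ k)
    (hSm : Measurable[m] S) (hTm : Measurable[m] T) (hS : MemLp S p μ) (hT : MemLp T (p / 2) μ)
    (hW : MemLp W q μ) (hW0 : μ[W | m] =ᵐ[μ] 0) :
    Integrable (fun ω ↦ gaussianSmoothing f (T ω) (S ω) * W ω) μ ∧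
      ∫ ω, gaussianSmoothing f (T ω) (S ω) * W ω ∂μ = 0 := by
  have integrable_mul := (memLp_gaussianSmoothing hf hfk hS hT).integrable_mul hW
  refine ⟨integrable_mul, integral_mul_eq_zero_of_condExp_eq_zero hm ?_ integrable_mul
    (hW.integrable hpq.symm.one_le) hW0⟩
  exact ((measurable_gaussianSmoothing hf).comp (hTm.prodMk hSm)).stronglyMeasurable

lemma holderConjugate_three_div_two_three : ENNReal.HolderConjugate (3 / 2) 3 := by
  rw [ENNReal.holderConjugate_iff, ENNReal.inv_div (by simp) (by simp), ← one_div,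
    ENNReal.div_add_div_same, two_add_one_eq_three]
  exact ENNReal.div_self (by simp) (by simp)

namespace IsZolotarevTest

lemma integrable_gaussianSmoothing (hf : IsZolotarevTest 2 L f) (hS : MemLp S 3 μ)
    (hT : MemLp T (3 / 2) μ) : Integrable (fun ω ↦ gaussianSmoothing f (T ω) (S ω)) μ := by
  simpa [two_add_one_eq_three, ENNReal.div_self, memLp_one_iff_integrable]
    using memLp_gaussianSmoothing hf.contDiff.continuous hf.isBigO_top hS hT

lemma integral_taylor_terms_eq_zero (hf : IsZolotarevTest 2 L f)
    (hm : m ≤ m0) (hSm : Measurable[m] S) (hTm : Measurable[m] T) (hS : MemLp S 3 μ)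
    (hT : MemLp T (3 / 2) μ) (hW : MemLp W 3 μ) (hW0 : μ[W | m] =ᵐ[μ] 0) :
    Integrable (fun ω ↦ gaussianSmoothing (deriv f) (T ω) (S ω) * W ω
        + gaussianSmoothing (deriv (deriv f)) (T ω) (S ω) / 2
          * (W ω ^ 2 - (μ[fun ω' ↦ W ω' ^ 2 | m]) ω)) μ ∧
      ∫ ω, (gaussianSmoothing (deriv f) (T ω) (S ω) * W ω
        + gaussianSmoothing (deriv (deriv f)) (T ω) (S ω) / 2
          * (W ω ^ 2 - (μ[fun ω' ↦ W ω' ^ 2 | m]) ω)) ∂μ = 0 := by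
  have conj : ENNReal.HolderConjugate (3 / (1 + 1 : ℕ)) 3 := by
    simpa [one_add_one_eq_two] using holderConjugate_three_div_two_three
  have conj' : ENNReal.HolderConjugate (3 / (0 + 1 : ℕ)) (3 / 2) := by
    simpa using holderConjugate_three_div_two_three.symm
  have memLp_sq : MemLp (fun ω ↦ W ω ^ 2) (3 / 2) μ := memLp_sq_div_two hW
  obtain ⟨integrable_first, integral_first⟩ := integral_gaussianSmoothing_mul_eq_zero hm
    hf.deriv.contDiff.continuous hf.deriv.isBigO_top hSm hTm hS hT hW hW0
  obtain ⟨integrable_second, integral_second⟩ := integral_gaussianSmoothing_mul_eq_zero hm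
    hf.deriv.deriv.contDiff.continuous hf.deriv.deriv.isBigO_top hSm hTm hS hT
    (memLp_sq.sub (memLp_condExp_sq hW (by norm_num)))
    (condExp_sub_condExp_eq_zero (memLp_sq.integrable conj'.symm.one_le))
  simp only [Pi.sub_apply] at integrable_second integral_second
  simp only [div_mul_eq_mul_div]
  refine ⟨integrable_first.add (integrable_second.div_const 2), ?_⟩
  rw [integral_add integrable_first (integrable_second.div_const 2), integral_div,
    integral_first, integral_second, zero_div, add_zero]

lemma abs_integral_gaussianSmoothing_sub_le (hf : IsZolotarevTest 2 L f)
    (hm : m ≤ m0) (hSm : Measurable[m] S) (hTm : Measurable[m] T) (hS : MemLp S 3 μ)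
    (hT : MemLp T (3 / 2) μ) (hT0 : 0 ≤ᵐ[μ] T) (hW : MemLp W 3 μ) (hW0 : μ[W | m] =ᵐ[μ] 0) :
    |∫ ω, gaussianSmoothing f (T ω) (S ω + W ω) ∂μ
        - ∫ ω, gaussianSmoothing f (T ω + (μ[fun ω' ↦ W ω' ^ 2 | m]) ω) (S ω) ∂μ|
      ≤ L / 6 * (1 + gaussianThirdAbsMoment) * ∫ ω, |W ω| ^ 3 ∂μ := by
  set v : Ω → ℝ := μ[fun ω' ↦ W ω' ^ 2 | m]
  have v_nonneg : 0 ≤ᵐ[μ] v := condExp_nonneg (ae_of_all _ fun ω ↦ sq_nonneg (W ω))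
  have memLp_v : MemLp v (3 / 2) μ := memLp_condExp_sq hW (by norm_num)
  obtain ⟨integrable_taylor, integral_taylor⟩ :=
    hf.integral_taylor_terms_eq_zero hm hSm hTm hS hT hW hW0
  have integrable_moved : Integrable (fun ω ↦ gaussianSmoothing f (T ω) (S ω + W ω)) μ :=
    hf.integrable_gaussianSmoothing (hS.add hW) hT
  have integrable_smoothed : Integrable (fun ω ↦ gaussianSmoothing f (T ω + v ω) (S ω)) μ :=
    hf.integrable_gaussianSmoothing hS (hT.add memLp_v)
  have integrable_difference : Integrable (fun ω ↦ gaussianSmoothing f (T ω) (S ω + W ω)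
      - gaussianSmoothing f (T ω + v ω) (S ω)) μ := integrable_moved.sub integrable_smoothed
  obtain ⟨integrable_bound, integral_bound⟩ := integral_abs_pow_add_sqrt_condExp_sq_pow_le hm
    Nat.AtLeastTwo.prop hW (div_nonneg L.coe_nonneg (by norm_num : (0 : ℝ) ≤ 6))
    gaussianThirdAbsMoment_nonneg
  have remainder_le : ∀ᵐ ω ∂μ, ‖gaussianSmoothing f (T ω) (S ω + W ω)
      - gaussianSmoothing f (T ω + v ω) (S ω) - (gaussianSmoothing (deriv f) (T ω) (S ω) * W ω
        + gaussianSmoothing (deriv (deriv f)) (T ω) (S ω) / 2 * (W ω ^ 2 - v ω))‖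
      ≤ L / 6 * (|W ω| ^ 3 + gaussianThirdAbsMoment * √(v ω) ^ 3) := by
    filter_upwards [hT0, v_nonneg] with ω hTω hvω
    exact hf.abs_gaussianSmoothing_sub_gaussianSmoothing_le hTω hvω (S ω) (W ω)
  rw [← integral_sub integrable_moved integrable_smoothed, ← sub_zero (∫ _, _ ∂μ),
    ← integral_taylor, ← integral_sub integrable_difference integrable_taylor]
  exact (norm_integral_le_of_norm_le integrable_bound remainder_le).trans integral_bound

end IsZolotarevTest

end LindebergStep

section MartingaleDifferences

variable {Ω : Type*} {m0 : MeasurableSpace Ω} {μ : Measure Ω}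
  {F : ℕ → MeasurableSpace Ω} {n : ℕ} {Y : ℕ → Ω → ℝ}

/-- The variance budget `s² - ∑_{j ≤ i} σ_j²(Y)` left after `i` steps, where
`σ_j²(Y) = E[Y_j² | F_{j-1}]`. It is `F (i - 1)`-measurable, one step ahead of the filtration. -/
def residualVariance (μ : Measure Ω) (F : ℕ → MeasurableSpace Ω) (Y : ℕ → Ω → ℝ) (s : ℝ) (i : ℕ)
    (ω : Ω) : ℝ :=
  s ^ 2 - ∑ j ∈ Finset.Icc 1 i, (μ[fun ω' ↦ Y j ω' ^ 2 | F (j - 1)]) ω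

lemma residualVariance_zero (s : ℝ) (ω : Ω) : residualVariance μ F Y s 0 ω = s ^ 2 := by
  simp [residualVariance]

lemma residualVariance_succ_add (s : ℝ) (i : ℕ) (ω : Ω) :
    residualVariance μ F Y s (i + 1) ω + (μ[fun ω' ↦ Y (i + 1) ω' ^ 2 | F i]) ω
      = residualVariance μ F Y s i ω := by
  simp [residualVariance, Finset.sum_Icc_succ_top, ← sub_sub]

lemma residualVariance_nonneg {s : ℝ}
    (hvar : (fun ω ↦ ∑ i ∈ Finset.Icc 1 n, (μ[fun ω' ↦ Y i ω' ^ 2 | F (i - 1)]) ω)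
      =ᵐ[μ] fun _ ↦ s ^ 2) {i : ℕ} (hi : i ≤ n) : 0 ≤ᵐ[μ] residualVariance μ F Y s i := by
  have condExp_sq_nonneg : ∀ᵐ ω ∂μ, ∀ j, 0 ≤ (μ[fun ω' ↦ Y j ω' ^ 2 | F (j - 1)]) ω :=
    ae_all_iff.2 fun j ↦ condExp_nonneg (ae_of_all _ fun ω ↦ sq_nonneg (Y j ω))
  filter_upwards [hvar, condExp_sq_nonneg] with ω hω nonneg
  rw [Pi.zero_apply, residualVariance, ← hω, sub_nonneg]
  exact Finset.sum_le_sum_of_subset_of_nonneg (Finset.Icc_subset_Icc_right hi)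
    fun j _ _ ↦ nonneg j

/-- The expectation of `f` at `Y_1 + ⋯ + Y_i` plus an independent centred Gaussian carrying the
residual variance. For `i = 0` only the Gaussian is present, for `i = n` only the `Y_j` are. -/
def lindebergMean (μ : Measure Ω) (F : ℕ → MeasurableSpace Ω) (Y : ℕ → Ω → ℝ) (s : ℝ) (f : ℝ → ℝ)
    (i : ℕ) : ℝ :=
  ∫ ω, gaussianSmoothing f (residualVariance μ F Y s i ω) (∑ j ∈ Finset.Icc 1 i, Y j ω) ∂μ

lemma lindebergMean_zero [IsProbabilityMeasure μ] {s : ℝ} (hs : 0 ≤ s) (f : ℝ → ℝ) :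
    lindebergMean μ F Y s f 0 = ∫ z, f (s * z) ∂gaussianReal 0 1 := by
  simp [lindebergMean, residualVariance_zero, gaussianSmoothing, Real.sqrt_sq hs]

lemma lindebergMean_last {s : ℝ}
    (hvar : (fun ω ↦ ∑ i ∈ Finset.Icc 1 n, (μ[fun ω' ↦ Y i ω' ^ 2 | F (i - 1)]) ω)
      =ᵐ[μ] fun _ ↦ s ^ 2) (f : ℝ → ℝ) :
    lindebergMean μ F Y s f n = ∫ ω, f (∑ j ∈ Finset.Icc 1 n, Y j ω) ∂μ := by
  refine integral_congr_ae ?_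
  filter_upwards [hvar] with ω hω
  rw [residualVariance, hω, sub_self, gaussianSmoothing_zero]

namespace IsMDS

lemma measurable_sum (hY : IsMDS μ F n Y) {i : ℕ} (hi : i ≤ n) :
    Measurable[F i] fun ω ↦ ∑ j ∈ Finset.Icc 1 i, Y j ω := by
  refine Finset.measurable_fun_sum _ fun j hj ↦ ?_
  obtain ⟨one_le, le⟩ := Finset.mem_Icc.1 hj
  exact (hY.adapted j one_le (le.trans hi)).mono (hY.mono le) le_rfl

lemma measurable_residualVariance_succ (hY : IsMDS μ F n Y) (s : ℝ) (i : ℕ) :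
    Measurable[F i] (residualVariance μ F Y s (i + 1)) := by
  refine Measurable.const_sub (Finset.measurable_fun_sum _ fun j hj ↦ ?_) _
  exact stronglyMeasurable_condExp.measurable.mono
    (hY.mono (Nat.sub_le_of_le_add (Finset.mem_Icc.1 hj).2)) le_rfl

variable [IsFiniteMeasure μ]

lemma integrable (hY : IsMDS μ F n Y) {i : ℕ} (hi : i ∈ Finset.Icc 1 n) : Integrable (Y i) μ :=
  (hY.memL2 i (Finset.mem_Icc.1 hi).1 (Finset.mem_Icc.1 hi).2).integrable one_le_two

lemma condExp_sum_succ (hY : IsMDS μ F n Y) {i : ℕ} (hi : i < n) :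
    μ[fun ω ↦ ∑ j ∈ Finset.Icc 1 (i + 1), Y j ω | F i]
      =ᵐ[μ] fun ω ↦ ∑ j ∈ Finset.Icc 1 i, Y j ω := by
  have integrable_sum : Integrable (fun ω ↦ ∑ j ∈ Finset.Icc 1 i, Y j ω) μ :=
    integrable_finsetSum _ fun j hj ↦ hY.integrable (Finset.Icc_subset_Icc_right hi.le hj)
  have split : (fun ω ↦ ∑ j ∈ Finset.Icc 1 (i + 1), Y j ω)
      = (fun ω ↦ ∑ j ∈ Finset.Icc 1 i, Y j ω) + Y (i + 1) := by
    ext ω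
    simp [Finset.sum_Icc_succ_top]
  rw [split]
  filter_upwards [condExp_add integrable_sum
    (hY.integrable (Finset.mem_Icc.2 ⟨i.succ_pos, hi⟩)) (F i), hY.mdiff (i + 1) i.succ_pos hi]
    with ω condExp_split increment_zero
  rw [condExp_split, Pi.add_apply, condExp_of_stronglyMeasurable (hY.le i)
    (hY.measurable_sum hi.le).stronglyMeasurable integrable_sum]
  simpa using increment_zero

lemma memLp_sum_of_le (hY : IsMDS μ F n Y) {p : ℝ≥0∞} (hp : 1 ≤ p)
    (hS : MemLp (fun ω ↦ ∑ j ∈ Finset.Icc 1 n, Y j ω) p μ) {i : ℕ} (hi : i ≤ n) :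
    MemLp (fun ω ↦ ∑ j ∈ Finset.Icc 1 i, Y j ω) p μ := by
  induction hi using Nat.decreasingInduction with
  | self => exact hS
  | of_succ i hi ih => exact (ih.condExp hp).ae_eq (hY.condExp_sum_succ hi)

lemma memLp_of_memLp_sum (hY : IsMDS μ F n Y) {p : ℝ≥0∞} (hp : 1 ≤ p)
    (hS : MemLp (fun ω ↦ ∑ j ∈ Finset.Icc 1 n, Y j ω) p μ) {i : ℕ} (hi : i < n) :
    MemLp (Y (i + 1)) p μ := by
  convert! (hY.memLp_sum_of_le hp hS hi).sub (hY.memLp_sum_of_le hp hS hi.le) using 1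
  ext ω
  simp [Finset.sum_Icc_succ_top]

lemma memLp_residualVariance (hY : IsMDS μ F n Y) {p : ℝ≥0∞} (hp : 2 ≤ p)
    (hS : MemLp (fun ω ↦ ∑ j ∈ Finset.Icc 1 n, Y j ω) p μ) (s : ℝ) {i : ℕ} (hi : i ≤ n) :
    MemLp (residualVariance μ F Y s i) (p / 2) μ := by
  refine (memLp_const (s ^ 2)).sub (memLp_finsetSum _ fun j hj ↦ memLp_condExp_sq ?_ hp)
  obtain ⟨j, rfl⟩ := Nat.exists_eq_add_of_le' (Finset.mem_Icc.1 hj).1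
  exact hY.memLp_of_memLp_sum (one_le_two.trans hp) hS ((Finset.mem_Icc.1 hj).2.trans hi)

lemma abs_lindebergMean_succ_sub_le (hY : IsMDS μ F n Y) {s : ℝ}
    (hvar : (fun ω ↦ ∑ i ∈ Finset.Icc 1 n, (μ[fun ω' ↦ Y i ω' ^ 2 | F (i - 1)]) ω)
      =ᵐ[μ] fun _ ↦ s ^ 2)
    (hS : MemLp (fun ω ↦ ∑ j ∈ Finset.Icc 1 n, Y j ω) 3 μ) {L : ℝ≥0} {f : ℝ → ℝ}
    (hf : IsZolotarevTest 2 L f) {i : ℕ} (hi : i < n) :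
    |lindebergMean μ F Y s f (i + 1) - lindebergMean μ F Y s f i|
      ≤ L / 6 * (1 + gaussianThirdAbsMoment) * ∫ ω, |Y (i + 1) ω| ^ 3 ∂μ := by
  have := hf.abs_integral_gaussianSmoothing_sub_le (hY.le i) (hY.measurable_sum hi.le)
    (hY.measurable_residualVariance_succ s i) (hY.memLp_sum_of_le (by norm_num) hS hi.le)
    (hY.memLp_residualVariance (by norm_num) hS s hi) (residualVariance_nonneg hvar hi)
    (hY.memLp_of_memLp_sum (by norm_num) hS hi) (hY.mdiff (i + 1) i.succ_pos hi)
  simpa only [lindebergMean, residualVariance_succ_add, Finset.sum_Icc_succ_top i.succ_pos]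
    using this

lemma abs_lindebergMean_sub_zero_le (hY : IsMDS μ F n Y) {s : ℝ}
    (hvar : (fun ω ↦ ∑ i ∈ Finset.Icc 1 n, (μ[fun ω' ↦ Y i ω' ^ 2 | F (i - 1)]) ω)
      =ᵐ[μ] fun _ ↦ s ^ 2)
    (hS : MemLp (fun ω ↦ ∑ j ∈ Finset.Icc 1 n, Y j ω) 3 μ) {L : ℝ≥0} {f : ℝ → ℝ}
    (hf : IsZolotarevTest 2 L f) {i : ℕ} (hi : i ≤ n) :
    |lindebergMean μ F Y s f i - lindebergMean μ F Y s f 0|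
      ≤ L / 6 * (1 + gaussianThirdAbsMoment) * ∑ j ∈ Finset.Icc 1 i, ∫ ω, |Y j ω| ^ 3 ∂μ := by
  induction i with
  | zero => simp
  | succ i ih =>
    have step := hY.abs_lindebergMean_succ_sub_le hvar hS hf (Nat.lt_of_succ_le hi)
    refine (abs_sub_le _ (lindebergMean μ F Y s f i) _).trans
      ((add_le_add step (ih (Nat.le_of_succ_le hi))).trans_eq ?_)
    rw [Finset.sum_Icc_succ_top i.succ_pos]
    ring

end IsMDS

end MartingaleDifferences

section Zolotarev

variable {Ω : Type*} {m0 : MeasurableSpace Ω} {μ : Measure Ω}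

lemma abs_integral_comp_sum_div_sub_le [IsProbabilityMeasure μ] {F : ℕ → MeasurableSpace Ω} {n : ℕ}
    {Y : ℕ → Ω → ℝ} (hY : IsMDS μ F n Y) {s : ℝ} (hs : 0 < s)
    (hvar : (fun ω ↦ ∑ i ∈ Finset.Icc 1 n, (μ[fun ω' ↦ Y i ω' ^ 2 | F (i - 1)]) ω)
      =ᵐ[μ] fun _ ↦ s ^ 2)
    (hS : MemLp (fun ω ↦ ∑ j ∈ Finset.Icc 1 n, Y j ω) 3 μ) {L : ℝ≥0} {f : ℝ → ℝ}
    (hf : IsZolotarevTest 2 L f) :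
    |∫ ω, f ((∑ j ∈ Finset.Icc 1 n, Y j ω) / s) ∂μ - ∫ z, f z ∂gaussianReal 0 1|
      ≤ L / 6 * (1 + gaussianThirdAbsMoment) * (s ^ 3)⁻¹
        * ∑ i ∈ Finset.Icc 1 n, ∫ ω, |Y i ω| ^ 3 ∂μ := by
  have scaled := hY.abs_lindebergMean_sub_zero_le hvar hS (hf.comp_const_mul s⁻¹) le_rfl
  rw [lindebergMean_zero hs.le, lindebergMean_last hvar] at scaled
  simp only [inv_mul_cancel_left₀ hs.ne', inv_mul_eq_div] at scaled
  convert! scaled using 2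
  push_cast
  rw [norm_inv, Real.norm_of_nonneg hs.le]
  ring

/-- The supremum runs over an unbounded set and so takes its junk value: for the test functions
`x ^ (k + 1) / (k + 1)! + c` the first integral is undefined, hence `0`, and the second takes
every value. -/
lemma zolotarev_eq_zero_of_not_memLp [IsFiniteMeasure μ] {U : Ω → ℝ} {ν : Measure ℝ}
    [IsProbabilityMeasure ν] {k : ℕ} (hU : AEStronglyMeasurable U μ) (hUk : ¬ MemLp U (k + 1 : ℕ) μ)
    (hν : MemLp id (k + 1 : ℕ) ν) : zolotarev (k + 1) μ U ν = 0 := by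
  refine Real.sSup_of_not_bddAbove fun ⟨M, hM⟩ ↦ ?_
  set c : ℝ := -(M + 1) - ∫ x, x ^ (k + 1) / (k + 1)! ∂ν with hc
  have integrable_pow : Integrable (fun x : ℝ ↦ x ^ (k + 1)) ν :=
    (hν.integrable_norm_pow k.succ_ne_zero).mono (by fun_prop) (by simp)
  have integral_comp : ∫ ω, (U ω ^ (k + 1) / (k + 1)! + c) ∂μ = 0 := by
    refine integral_undef fun h ↦ hUk ?_
    have integrable_pow_comp : Integrable (fun ω ↦ U ω ^ (k + 1)) μ := by
      convert! (h.sub (integrable_const c)).mul_const ((k + 1)! : ℝ) using 2 with ω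
      simp [field]
    refine (integrable_norm_rpow_iff hU (by simp) (by simp)).1 ?_
    simpa only [ENNReal.toReal_natCast, Real.rpow_natCast, norm_pow] using integrable_pow_comp.norm
  have integral_test : ∫ x, (x ^ (k + 1) / (k + 1)! + c) ∂ν = -(M + 1) := by
    rw [integral_add (integrable_pow.div_const _) (integrable_const _)]
    simp [hc]
  have test := IsZolotarevTest.pow_div_factorial_add_const k c
  have := hM ⟨_, test.contDiff, test.lipschitz, rfl⟩
  simp only [integral_comp, integral_test] at this
  linarith

end Zolotarev

/-- Proposition 3.4, the `r = 3` bound: `Z₃(X_n, N) ≲ s_n⁻³ Σ E|Y_i|³` when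
`Σ σ_i²(Y) = s_n²` a.s. -/
theorem zolotarev3_bound :
    ∃ C : ℝ, 0 < C ∧
      ∀ (Ω : Type) (m0 : MeasurableSpace Ω) (μ : Measure Ω), IsProbabilityMeasure μ →
      ∀ (F : ℕ → MeasurableSpace Ω) (n : ℕ) (Y : ℕ → Ω → ℝ) (sn : ℝ),
        2 ≤ n → IsMDS μ F n Y → 0 < sn →
        sn ^ 2 = (∑ i ∈ Finset.Icc 1 n, ∫ ω, (Y i ω) ^ 2 ∂μ) →
        ((fun ω => ∑ i ∈ Finset.Icc 1 n, (μ[fun ω' => (Y i ω') ^ 2 | F (i - 1)]) ω)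
          =ᵐ[μ] (fun _ => sn ^ 2)) →
        zolotarev 3 μ (fun ω => (∑ i ∈ Finset.Icc 1 n, Y i ω) / sn) stdGaussian ≤
          C * (sn ^ 3)⁻¹ * ∑ i ∈ Finset.Icc 1 n, ∫ ω, |Y i ω| ^ 3 ∂μ := by
  have const_pos : 0 < 1 / 6 * (1 + gaussianThirdAbsMoment) := by
    linarith [gaussianThirdAbsMoment_nonneg]
  refine ⟨1 / 6 * (1 + gaussianThirdAbsMoment), const_pos,
    fun _ _ μ _ _ n Y s _ hY hs _ hvar ↦ ?_⟩
  have bound_nonneg : 0 ≤ 1 / 6 * (1 + gaussianThirdAbsMoment) * (s ^ 3)⁻¹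
      * ∑ i ∈ Finset.Icc 1 n, ∫ ω, |Y i ω| ^ 3 ∂μ := by
    have := const_pos.le
    positivity
  by_cases hS : MemLp (fun ω ↦ ∑ i ∈ Finset.Icc 1 n, Y i ω) 3 μ
  · refine Real.sSup_le ?_ bound_nonneg
    rintro _ ⟨f, contDiff, lipschitz, rfl⟩
    exact (le_abs_self _).trans
      (abs_integral_comp_sum_div_sub_le hY hs hvar hS (L := 1) ⟨contDiff, lipschitz⟩)
  · refine (zolotarev_eq_zero_of_not_memLp (k := 2) ?_ ?_
      (memLp_id_gaussianReal' _ (by simp))).trans_le bound_nonneg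
    · exact ((hY.measurable_sum le_rfl).mono (hY.le n) le_rfl).div_const s |>.aestronglyMeasurable
    · exact fun h ↦ hS (by simpa [mul_div_cancel₀ _ hs.ne'] using h.const_mul s)
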